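/- Let d ≥ 2 be an integer, let G be a finite graph of maximum average degree at most d such that G is (d−1)-choosable, let L be a list assignment for G with |L(v)| ≥ d for all vertices v, and let r be a request for G and L. If dom(r) is an independent set in G, then r is (1/(2d^{2d}))-satisfiable. -/

import Mathlib

def IsLColoring {V : Type*} (G : SimpleGraph V) (L : V → Finset ℕ) (φ : V → ℕ) : Prop :=
  (∀ v, φ v ∈ L v) ∧ ∀ ⦃u w : V⦄, G.Adj u w → φ u ≠ φ w

def EpsSat {V : Type*} (G : SimpleGraph V) (L : V → Finset ℕ) (D : Finset V)
    (r : V → ℕ) (ε : ℝ) : Prop :=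
  ∃ φ : V → ℕ, IsLColoring G L φ ∧ ε * D.card ≤ ((D.filter fun v => φ v = r v).card : ℝ)

/-- The maximum average degree of `G` is at most `x`: every non-null subgraph `H`
satisfies `2|E(H)| ≤ x·|V(H)|`. -/
def MadLE {V : Type*} (G : SimpleGraph V) (x : ℝ) : Prop :=
  ∀ H : G.Subgraph, H.verts.Nonempty → 2 * (H.edgeSet.ncard : ℝ) ≤ x * H.verts.ncard

/-- The choosability of `G` is at most `k`. -/
def Choosable {V : Type*} (G : SimpleGraph V) (k : ℕ) : Prop :=
  ∀ L : V → Finset ℕ, (∀ v, k ≤ (L v).card) → ∃ φ, IsLColoring G L φ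

open Classical in
theorem aux_exists_c {V : Type*} [Fintype V] (d : ℕ) (hd : 2 ≤ d)
    (L' : V → Finset ℕ) (hL : ∀ v, (L' v).card = d) (A : Finset V) (r : V → ℕ)
    (N : V → Finset V) (hN : ∀ v ∈ A, (N v).card ≤ 2 * d) :
    ∃ c : V → ℕ, (∀ v, c v ∈ L' v) ∧
      A.card ≤ (A.filter fun v => ∀ u ∈ N v, c u = r v ∨ r v ∉ L' u).card * d ^ (2 * d) := by
  set Ω := Fintype.piFinset L' with hΩ
  have hne : Ω.Nonempty := by
    rw [hΩ, Fintype.piFinset_nonempty]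
    intro v
    rw [← Finset.card_pos, hL]; omega
  let good : (V → ℕ) → V → Prop := fun c v => ∀ u ∈ N v, c u = r v ∨ r v ∉ L' u
  have key : ∀ v ∈ A, Ω.card ≤ (Ω.filter fun c => good c v).card * d ^ (2 * d) := by
    intro v hv
    let P : V → Prop := fun u => u ∈ N v ∧ r v ∈ L' u
    have hsub : Fintype.piFinset (fun u => if P u then {r v} else L' u) ⊆
        Ω.filter fun c => good c v := by
      intro c hc
      rw [Fintype.mem_piFinset] at hc
      rw [Finset.mem_filter, hΩ, Fintype.mem_piFinset]
      constructor
      · intro u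
        have := hc u
        by_cases h : P u
        · simp only [h, if_true, Finset.mem_singleton] at this
          rw [this]; exact h.2
        · simpa only [h, if_false] using this
      · intro u hu
        by_cases h : r v ∈ L' u
        · left
          have := hc u
          have hP : P u := ⟨hu, h⟩
          simpa only [hP, if_true, Finset.mem_singleton] using this
        · exact Or.inr h
    have h1 := Finset.card_le_card hsub
    rw [Fintype.card_piFinset] at h1
    have h2 : Ω.card = (∏ u, (if P u then ({r v} : Finset ℕ) else L' u).card) *
        ∏ u, (if P u then d else 1) := by
      rw [hΩ, Fintype.card_piFinset, ← Finset.prod_mul_distrib]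
      apply Finset.prod_congr rfl
      intro u _
      by_cases h : P u <;> simp [h, hL]
    have h3 : ∏ u, (if P u then d else 1) ≤ d ^ (2 * d) := by
      rw [Finset.prod_ite]
      simp only [Finset.prod_const, one_pow, mul_one]
      apply Nat.pow_le_pow_right (by omega)
      refine le_trans (Finset.card_le_card ?_) (hN v hv)
      intro u hu
      exact (Finset.mem_filter.mp hu).2.1
    rw [h2]
    exact Nat.mul_le_mul h1 h3
  by_contra hcon
  push Not at hcon
  have hlt : ∑ c ∈ Ω, (A.filter fun v => good c v).card * d ^ (2 * d) < ∑ c ∈ Ω, A.card := by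
    apply Finset.sum_lt_sum_of_nonempty hne
    intro c hc
    exact hcon c (fun v => Fintype.mem_piFinset.mp hc v)
  have hge : ∑ v ∈ A, Ω.card ≤ ∑ v ∈ A, (Ω.filter fun c => good c v).card * d ^ (2 * d) :=
    Finset.sum_le_sum key
  rw [← Finset.sum_mul] at hlt hge
  have hdc := Finset.sum_card_bipartiteAbove_eq_sum_card_bipartiteBelow (s := Ω) (t := A) good
  simp only [Finset.bipartiteAbove, Finset.bipartiteBelow] at hdc
  rw [hdc] at hlt
  simp only [Finset.sum_const, smul_eq_mul] at hlt hge
  rw [mul_comm] at hge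
  omega

open Classical in
theorem aux_deg {V : Type*} [Fintype V] (d : ℕ) (G : SimpleGraph V)
    (hmad : MadLE G d) (S : Finset V) :
    ∑ v ∈ S, (S.filter (G.Adj v)).card ≤ d * S.card := by
  rcases S.eq_empty_or_nonempty with rfl | hS
  · simp
  let H : G.Subgraph := (⊤ : G.Subgraph).induce (S : Set V)
  have h := hmad H (by simpa [H] using hS)
  have hv : H.verts.ncard = S.card := by
    simp [H, Set.ncard_coe_finset]
  have he : H.edgeSet.ncard = H.spanningCoe.edgeFinset.card := by
    rw [← SimpleGraph.Subgraph.edgeSet_spanningCoe, ← Set.ncard_coe_finset,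
      SimpleGraph.coe_edgeFinset]
  have hsum := H.spanningCoe.sum_degrees_eq_twice_card_edges
  have hle : ∑ v ∈ S, (S.filter (G.Adj v)).card ≤ ∑ v, H.spanningCoe.degree v := by
    refine le_trans (Finset.sum_le_sum (f := fun v => (S.filter (G.Adj v)).card)
      (g := fun v => H.spanningCoe.degree v) ?_)
      (Finset.sum_le_sum_of_subset (Finset.subset_univ S))
    intro v hv
    rw [← SimpleGraph.card_neighborFinset_eq_degree]
    apply Finset.card_le_card
    intro u hu
    rw [Finset.mem_filter] at hu
    rw [SimpleGraph.mem_neighborFinset]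
    simp [H, hv, hu.1, hu.2]
  rw [hv, he] at h
  have h' : 2 * H.spanningCoe.edgeFinset.card ≤ d * S.card := by exact_mod_cast h
  omega

open Classical in
theorem aux_base {V : Type*} [Fintype V] (d : ℕ) (hd : 2 ≤ d) (G : SimpleGraph V)
    (hmad : MadLE G d) (hch : Choosable G (d - 1)) (L : V → Finset ℕ)
    (hL : ∀ v, d ≤ (L v).card) (D : Finset V) (r : V → ℕ)
    (hr : ∀ v ∈ D, r v ∈ L v)
    (hind : ∀ u ∈ D, ∀ v ∈ D, ¬ G.Adj u v) (S : Finset V) (hDS : D ⊆ S)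
    (hS : ∀ u ∈ S, u ∉ D → d ≤ (S.filter (G.Adj u)).card) :
    ∃ φ : V → ℕ, (∀ v, φ v ∈ L v) ∧ (∀ u ∈ S, ∀ w ∈ S, G.Adj u w → φ u ≠ φ w) ∧
      D.card ≤ 2 * d ^ (2 * d) * (D.filter fun v => φ v = r v).card := by
  set deg : V → ℕ := fun v => (S.filter (G.Adj v)).card with hdeg
  set A := D.filter (fun v => deg v ≤ 2 * d) with hA
  have hAD : D.card ≤ 2 * A.card := by
    have h1 : ∑ v ∈ S, deg v ≤ d * S.card := aux_deg d G hmad S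
    rw [← Finset.sum_sdiff hDS] at h1
    have h2 : (S \ D).card * d ≤ ∑ v ∈ S \ D, deg v := by
      rw [← smul_eq_mul]
      apply Finset.card_nsmul_le_sum
      intro v hv
      rw [Finset.mem_sdiff] at hv
      exact hS v hv.1 hv.2
    have h3 : (D.filter (fun v => ¬ deg v ≤ 2 * d)).card * (2 * d) ≤ ∑ v ∈ D, deg v := by
      refine le_trans ?_ (Finset.sum_le_sum_of_subset (Finset.filter_subset (fun v => ¬ deg v ≤ 2 * d) D))
      rw [← smul_eq_mul]
      apply Finset.card_nsmul_le_sum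
      intro v hv
      have := (Finset.mem_filter.mp hv).2
      omega
    have h4 := Finset.card_filter_add_card_filter_not (s := D) (fun v => deg v ≤ 2 * d)
    have h5 := Finset.card_sdiff_add_card_eq_card hDS
    rw [← hA] at h4
    rw [← h5] at h1
    have h6 : (D.filter (fun v => ¬ deg v ≤ 2 * d)).card * 2 ≤ D.card := by
      refine le_of_mul_le_mul_left (a := d) ?_ (by omega)
      nlinarith
    omega
  choose L' hL'sub hL' using fun v => Finset.exists_subset_card_eq (hL v)
  obtain ⟨c, hc, hcA⟩ := aux_exists_c d hd L' hL' A r (fun v => S.filter (G.Adj v))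
    (fun v hv => (Finset.mem_filter.mp hv).2)
  obtain ⟨ψ, hψ, hψp⟩ := hch (fun u => (L' u).erase (c u)) (fun v => by
    rw [Finset.card_erase_of_mem (hc v), hL'])
  set B := A.filter (fun v => ∀ u ∈ S.filter (G.Adj v), c u = r v ∨ r v ∉ L' u) with hB
  have hBD : B ⊆ D := (Finset.filter_subset _ _).trans (Finset.filter_subset _ _)
  have hBne : ∀ u ∈ B, ∀ w ∈ S, G.Adj u w → ψ w ≠ r u := by
    intro u hu w hw huw heq
    have h1 := (Finset.mem_filter.mp hu).2 w (Finset.mem_filter.mpr ⟨hw, huw⟩)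
    have h2 := Finset.mem_erase.mp (hψ w)
    rw [heq] at h2
    rcases h1 with h1 | h1
    · exact h2.1 h1.symm
    · exact h1 h2.2
  refine ⟨fun v => if v ∈ B then r v else ψ v, ?_, ?_, ?_⟩
  · intro v
    by_cases h : v ∈ B
    · simp only [h, if_true]; exact hr v (hBD h)
    · simp only [h, if_false]; exact hL'sub v (Finset.mem_of_mem_erase (hψ v))
  · intro u hu w hw huw
    by_cases h : u ∈ B <;> by_cases h' : w ∈ B <;> simp only [h, h', if_true, if_false]
    · exact absurd huw (hind u (hBD h) w (hBD h'))
    · exact (hBne u h w hw huw).symm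
    · exact hBne w h' u hu huw.symm
    · exact hψp huw
  · have : B.card ≤ (D.filter fun v => (if v ∈ B then r v else ψ v) = r v).card := by
      apply Finset.card_le_card
      intro v hv
      exact Finset.mem_filter.mpr ⟨hBD hv, by simp [hv]⟩
    have h2 := Nat.mul_le_mul_right (d ^ (2 * d)) this
    calc D.card ≤ 2 * A.card := hAD
      _ ≤ 2 * (B.card * d ^ (2 * d)) := by omega
      _ ≤ 2 * (_ * d ^ (2 * d)) := Nat.mul_le_mul_left 2 h2
      _ = _ := by ring

open Classical in
theorem aux_ind {V : Type*} [Fintype V] (d : ℕ) (hd : 2 ≤ d) (G : SimpleGraph V)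
    (hmad : MadLE G d) (hch : Choosable G (d - 1)) (L : V → Finset ℕ)
    (hL : ∀ v, d ≤ (L v).card) (D : Finset V) (r : V → ℕ)
    (hr : ∀ v ∈ D, r v ∈ L v)
    (hind : ∀ u ∈ D, ∀ v ∈ D, ¬ G.Adj u v) (S : Finset V) (hDS : D ⊆ S) :
    ∃ φ : V → ℕ, (∀ v, φ v ∈ L v) ∧ (∀ u ∈ S, ∀ w ∈ S, G.Adj u w → φ u ≠ φ w) ∧
      D.card ≤ 2 * d ^ (2 * d) * (D.filter fun v => φ v = r v).card := by
  induction S using Finset.strongInduction with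
  | H S ih =>
    by_cases hS : ∀ u ∈ S, u ∉ D → d ≤ (S.filter (G.Adj u)).card
    · exact aux_base d hd G hmad hch L hL D r hr hind S hDS hS
    push Not at hS
    obtain ⟨x, hxS, hxD, hx⟩ := hS
    obtain ⟨φ, h1, h2, h3⟩ := ih (S.erase x) (Finset.erase_ssubset hxS)
      (fun v hv => Finset.mem_erase.mpr ⟨fun h => hxD (h ▸ hv), hDS hv⟩)
    obtain ⟨a, haL, haN⟩ : ∃ a ∈ L x, a ∉ (S.filter (G.Adj x)).image φ := by
      apply Finset.exists_mem_notMem_of_card_lt_card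
      exact lt_of_le_of_lt Finset.card_image_le (lt_of_lt_of_le hx (hL x))
    have hav : ∀ w ∈ S, G.Adj x w → φ w ≠ a := fun w hw hxw h =>
      haN (Finset.mem_image.mpr ⟨w, Finset.mem_filter.mpr ⟨hw, hxw⟩, h⟩)
    refine ⟨Function.update φ x a, ?_, ?_, ?_⟩
    · intro v
      by_cases h : v = x
      · subst h; simpa using haL
      · simpa [h] using h1 v
    · intro u hu w hw huw
      by_cases h : u = x
      · subst h
        have h' : w ≠ u := huw.ne'
        simpa [h'] using (hav w hw huw).symm
      · by_cases h' : w = x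
        · subst h'
          simpa [h] using hav u hu huw.symm
        · simpa [h, h'] using h2 u (Finset.mem_erase.mpr ⟨h, hu⟩) w
            (Finset.mem_erase.mpr ⟨h', hw⟩) huw
    · have : (D.filter fun v => Function.update φ x a v = r v) = D.filter fun v => φ v = r v := by
        apply Finset.filter_congr
        intro v hv
        have : v ≠ x := fun h => hxD (h ▸ hv)
        simp [this]
      rw [this]; exact h3

theorem stmt14 {V : Type*} [Fintype V] (d : ℕ) (hd : 2 ≤ d) (G : SimpleGraph V)
    (hmad : MadLE G d) (hch : Choosable G (d - 1)) (L : V → Finset ℕ)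
    (hL : ∀ v, d ≤ (L v).card) (D : Finset V) (r : V → ℕ)
    (hr : ∀ v ∈ D, r v ∈ L v)
    (hind : ∀ u ∈ D, ∀ v ∈ D, ¬ G.Adj u v) :
    EpsSat G L D r (1 / (2 * d ^ (2 * d))) := by
  obtain ⟨φ, h1, h2, h3⟩ := aux_ind d hd G hmad hch L hL D r hr hind Finset.univ
    (Finset.subset_univ D)
  refine ⟨φ, ⟨h1, fun u w h => h2 u (Finset.mem_univ _) w (Finset.mem_univ _) h⟩, ?_⟩
  have hpos : (0 : ℝ) < 2 * (d : ℝ) ^ (2 * d) := by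
    have : (0 : ℝ) < d := by exact_mod_cast (by omega : 0 < d)
    positivity
  rw [one_div, inv_mul_le_iff₀ hpos]
  have h4 : (D.card : ℝ) ≤ 2 * (d : ℝ) ^ (2 * d) * ((D.filter fun v => φ v = r v).card : ℝ) := by
    exact_mod_cast h3
  convert h4
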